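/- arXiv:2403.11939 — 3 statements merged into one kernel-verified Lean document; each statement's English description precedes it below -/
import Mathlib

section
/- Let M be a persistence module over the poset ℝ₊² = [0,∞) × [0,∞) and let P be a subposet of ℝ₊² such that the restriction M|_P is isomorphic to a direct sum A ⊕ B of persistence modules over P, where A is indecomposable and not thin. Then M is not interval decomposable. -/
/-- A (pointwise finite-dimensional) persistence module over a poset `P` with
coefficients in a field `K`: a functor from `P` to finite-dimensional `K`-vector
spaces. -/
structure PersMod (K : Type) [Field K] (P : Type) [Preorder P] where
  carrier : P → Type
  [acg : ∀ p, AddCommGroup (carrier p)]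
  [mod : ∀ p, Module K (carrier p)]
  [fd : ∀ p, FiniteDimensional K (carrier p)]
  map : ∀ {p q : P}, p ≤ q → (carrier p →ₗ[K] carrier q)
  map_id : ∀ p : P, map (le_refl p) = LinearMap.id
  map_comp : ∀ {p q r : P} (h₁ : p ≤ q) (h₂ : q ≤ r),
    map (h₁.trans h₂) = (map h₂).comp (map h₁)

attribute [instance] PersMod.acg PersMod.mod PersMod.fd

namespace PersMod

variable {K : Type} [Field K] {P : Type} [Preorder P]

/-- Pointwise direct sum of two persistence modules. -/
def dsum (M N : PersMod K P) : PersMod K P where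
  carrier p := M.carrier p × N.carrier p
  map h := (M.map h).prodMap (N.map h)
  map_id p := by
    show (M.map (le_refl p)).prodMap (N.map (le_refl p)) = LinearMap.id
    rw [M.map_id, N.map_id]; ext x <;> rfl
  map_comp {p q r} h₁ h₂ := by
    show (M.map (h₁.trans h₂)).prodMap (N.map (h₁.trans h₂)) =
      ((M.map h₂).prodMap (N.map h₂)).comp ((M.map h₁).prodMap (N.map h₁))
    rw [M.map_comp h₁ h₂, N.map_comp h₁ h₂]; ext x <;> rfl

/-- An isomorphism of persistence modules: a family of linear isomorphisms commuting
with the structure maps. -/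
structure Iso (M N : PersMod K P) where
  hom : ∀ p, M.carrier p ≃ₗ[K] N.carrier p
  naturality : ∀ {p q : P} (h : p ≤ q),
    ((hom q : M.carrier q →ₗ[K] N.carrier q)).comp (M.map h) =
      (N.map h).comp (hom p : M.carrier p →ₗ[K] N.carrier p)

/-- Two persistence modules are isomorphic if there is an isomorphism between them. -/
def Isomorphic (M N : PersMod K P) : Prop := Nonempty (Iso M N)

/-- A persistence module is thin if all its vector spaces have dimension at most 1. -/
def IsThin (M : PersMod K P) : Prop := ∀ p, Module.finrank K (M.carrier p) ≤ 1

/-- The zero persistence module: all vector spaces are `0`. -/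
def IsZero (M : PersMod K P) : Prop := ∀ p, ∀ x : M.carrier p, x = 0

/-- A persistence module is indecomposable if whenever it is isomorphic to a direct
sum `A ⊕ B`, one of `A`, `B` is zero. -/
def Indecomposable (M : PersMod K P) : Prop :=
  ∀ A B : PersMod K P, M.Isomorphic (A.dsum B) → A.IsZero ∨ B.IsZero

/-- The structure map of a pointwise direct sum of a family of persistence modules. -/
def familyMap {ι : Type} (f : ι → PersMod K P) {p q : P} (h : p ≤ q) :
    (Π₀ i, (f i).carrier p) →ₗ[K] Π₀ i, (f i).carrier q :=
  DFinsupp.mapRange.linearMap (fun i => (f i).map h)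

/-- An isomorphism from `M` to the pointwise direct sum of the family `f`. -/
structure IsoToDirectSum {ι : Type} (M : PersMod K P) (f : ι → PersMod K P) where
  hom : ∀ p, M.carrier p ≃ₗ[K] Π₀ i, (f i).carrier p
  naturality : ∀ {p q : P} (h : p ≤ q),
    ((hom q : M.carrier q →ₗ[K] Π₀ i, (f i).carrier q)).comp (M.map h) =
      (familyMap f h).comp (hom p : M.carrier p →ₗ[K] Π₀ i, (f i).carrier p)

/-- A persistence module is interval decomposable if it is isomorphic to a direct sum
of thin persistence modules. -/
def IntervalDecomposable (M : PersMod K P) : Prop :=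
  ∃ (ι : Type) (f : ι → PersMod K P),
    (∀ i, (f i).IsThin) ∧ Nonempty (IsoToDirectSum M f)

/-- Restriction of a persistence module to a subposet `Q ⊆ P`. -/
def restrict (M : PersMod K P) (Q : Set P) : PersMod K Q where
  carrier q := M.carrier q.1
  map {q₁ q₂} h := M.map (show (q₁ : P) ≤ (q₂ : P) from h)
  map_id q := M.map_id q.1
  map_comp h₁ h₂ := M.map_comp h₁ h₂

end PersMod

open scoped NNReal

/-!
Every decomposition of `M` into thin modules restricts to one of `M|_P`, so it suffices that an
indecomposable direct summand `A ≠ 0` of `⨁ i, f i` is a direct summand of some `f i`. By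
Fitting's lemma, applied at each place, an endomorphism `φ` of `A` splits `A` into
`⋃ₙ ker φⁿ` and `⋂ₙ im φⁿ`. If the former vanishes, then `φ` is invertible; if the latter does,
then `φ` fixes no nonzero vector and `1 - φ` is invertible. Hence `End A` is local. The composites
`A → f i → A` sum to the identity pointwise. Although this sum may be infinite, on any given
vector `x ≠ 0` it is finite, and that finite partial sum `ψ` satisfies `ψ x = x`: hence `1 - ψ` is
not a unit, so `ψ` is, and therefore so is one of its terms.
-/

namespace PersMod

variable {K : Type} [Field K] {P : Type} [Preorder P]

section Morphisms

variable {L M N : PersMod K P}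

/-- A family of linear maps is natural if it commutes with the structure maps, that is, if it is a
morphism of persistence modules. Morphisms are kept unbundled so that endomorphisms form a subring
of a product of endomorphism rings; see `endRing`. -/
def IsNatural (φ : ∀ p, M.carrier p →ₗ[K] N.carrier p) : Prop :=
  ∀ ⦃p q : P⦄ (h : p ≤ q), φ q ∘ₗ M.map h = N.map h ∘ₗ φ p

theorem IsNatural.apply_map {φ : ∀ p, M.carrier p →ₗ[K] N.carrier p} (hφ : IsNatural φ)
    {p q : P} (h : p ≤ q) (x : M.carrier p) : φ q (M.map h x) = N.map h (φ p x) :=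
  LinearMap.congr_fun (hφ h) x

theorem IsNatural.comp {ψ : ∀ p, M.carrier p →ₗ[K] N.carrier p}
    {φ : ∀ p, L.carrier p →ₗ[K] M.carrier p} (hψ : IsNatural ψ) (hφ : IsNatural φ) :
    IsNatural fun p => ψ p ∘ₗ φ p := by
  intro p q h
  rw [LinearMap.comp_assoc, hφ h, ← LinearMap.comp_assoc, hψ h, LinearMap.comp_assoc]

theorem IsNatural.symm {e : ∀ p, M.carrier p ≃ₗ[K] N.carrier p}
    (he : IsNatural fun p => (e p).toLinearMap) :
    IsNatural fun p => (e p).symm.toLinearMap := by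
  intro p q h
  ext y
  refine (e q).symm_apply_eq.mpr ?_
  calc N.map h y
      = N.map h (e p ((e p).symm y)) := by rw [LinearEquiv.apply_symm_apply]
    _ = e q (M.map h ((e p).symm y)) := (he.apply_map h _).symm

/-- `M` is a retract of `N` if the identity of `M` factors through `N`. This is the form in which
direct summands are handled, since it does not refer to a complement. -/
def IsRetract (M N : PersMod K P) : Prop :=
  ∃ (s : ∀ p, M.carrier p →ₗ[K] N.carrier p) (t : ∀ p, N.carrier p →ₗ[K] M.carrier p),
    IsNatural s ∧ IsNatural t ∧ ∀ p, Function.LeftInverse (t p) (s p)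

theorem IsRetract.isThin (h : M.IsRetract N) (hN : N.IsThin) : M.IsThin := by
  obtain ⟨s, t, -, -, hts⟩ := h
  exact fun p => (LinearMap.finrank_le_finrank_of_injective (hts p).injective).trans (hN p)

theorem isRetract_of_isomorphic_dsum (h : L.Isomorphic (M.dsum N)) : M.IsRetract L := by
  obtain ⟨e⟩ := h
  have he : IsNatural fun p => (e.hom p).toLinearMap := fun _ _ h => e.naturality h
  have hinl : IsNatural (M := M) (N := M.dsum N) fun p => LinearMap.inl K _ (N.carrier p) :=
    fun _ _ h => LinearMap.ext fun x => Prod.ext rfl (map_zero (N.map h)).symm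
  have hfst : IsNatural (M := M.dsum N) (N := M) fun p => LinearMap.fst K _ (N.carrier p) :=
    fun _ _ _ => rfl
  exact ⟨_, _, he.symm.comp hinl, hfst.comp he,
    fun p x => congrArg Prod.fst ((e.hom p).apply_symm_apply (x, 0))⟩

theorem IsZero.isThin (hM : M.IsZero) : M.IsThin := fun p =>
  have : Subsingleton (M.carrier p) := subsingleton_of_forall_eq 0 (hM p)
  Module.finrank_zero_of_subsingleton.trans_le zero_le_one

end Morphisms

section Submodules

variable {M N : PersMod K P}

/-- A family of subspaces of `M` is stable if the structure maps preserve it, that is, if it is a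
submodule of the persistence module `M`. -/
def IsStable (U : ∀ p, Submodule K (M.carrier p)) : Prop :=
  ∀ ⦃p q : P⦄ (h : p ≤ q), U p ≤ (U q).comap (M.map h)

theorem isStable_ker {φ : ∀ p, M.carrier p →ₗ[K] N.carrier p} (hφ : IsNatural φ) :
    IsStable fun p => LinearMap.ker (φ p) := by
  intro p q h x hx
  rw [Submodule.mem_comap, LinearMap.mem_ker, hφ.apply_map, LinearMap.mem_ker.mp hx, map_zero]

theorem isStable_range {φ : ∀ p, M.carrier p →ₗ[K] N.carrier p} (hφ : IsNatural φ) :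
    IsStable fun p => LinearMap.range (φ p) := by
  rintro p q h _ ⟨x, rfl⟩
  exact ⟨M.map h x, hφ.apply_map h x⟩

theorem IsStable.iSup {κ : Sort*} {U : κ → ∀ p, Submodule K (M.carrier p)}
    (hU : ∀ k, IsStable (U k)) : IsStable fun p => ⨆ k, U k p := fun _ _ h =>
  iSup_le fun k => (hU k h).trans (Submodule.comap_mono (le_iSup (fun k => U k _) k))

theorem IsStable.iInf {κ : Sort*} {U : κ → ∀ p, Submodule K (M.carrier p)}
    (hU : ∀ k, IsStable (U k)) : IsStable fun p => ⨅ k, U k p := fun _ _ h => by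
  rw [Submodule.comap_iInf]
  exact iInf_mono fun k => hU k h

/-- A stable family of subspaces, regarded as a persistence module with the restricted structure
maps. -/
def ofIsStable {U : ∀ p, Submodule K (M.carrier p)} (hU : IsStable U) : PersMod K P where
  carrier p := U p
  map h := (M.map h).restrict (hU h)
  map_id p := by
    ext x
    simp [M.map_id]
  map_comp h₁ h₂ := by
    ext x
    simp [M.map_comp h₁ h₂]

theorem isomorphic_dsum_of_isCompl {U V : ∀ p, Submodule K (M.carrier p)} (hU : IsStable U)
    (hV : IsStable V) (hUV : ∀ p, IsCompl (U p) (V p)) :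
    M.Isomorphic ((ofIsStable hU).dsum (ofIsStable hV)) := by
  let e p := Submodule.prodEquivOfIsCompl (U p) (V p) (hUV p)
  have he : IsNatural (M := (ofIsStable hU).dsum (ofIsStable hV)) (N := M)
      fun p => (e p).toLinearMap :=
    fun p _ h => LinearMap.ext fun (x : U p × V p) =>
      (map_add (M.map h) (x.1 : M.carrier p) x.2).symm
  exact ⟨⟨fun p => (e p).symm, fun h => he.symm h⟩⟩

theorem Indecomposable.eq_bot_or_eq_bot (hM : M.Indecomposable)
    {U V : ∀ p, Submodule K (M.carrier p)} (hU : IsStable U) (hV : IsStable V)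
    (hUV : ∀ p, IsCompl (U p) (V p)) : (∀ p, U p = ⊥) ∨ ∀ p, V p = ⊥ := by
  refine (hM _ _ (isomorphic_dsum_of_isCompl hU hV hUV)).imp ?_ ?_ <;>
    exact fun h p => (Submodule.eq_bot_iff _).mpr fun x hx => congrArg Subtype.val (h p ⟨x, hx⟩)

end Submodules

section EndomorphismRing

variable {A N : PersMod K P}

/-- The endomorphism ring of a persistence module. -/
def endRing (A : PersMod K P) : Subring (∀ p, Module.End K (A.carrier p)) where
  carrier := {φ | IsNatural φ}
  mul_mem' hφ hψ := hφ.comp hψ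
  one_mem' _ _ _ := rfl
  add_mem' hφ hψ p q h := by
    simp only [Pi.add_apply, LinearMap.add_comp, LinearMap.comp_add, hφ h, hψ h]
  zero_mem' p q h := by
    simp only [Pi.zero_apply, LinearMap.zero_comp, LinearMap.comp_zero]
  neg_mem' hφ p q h := by
    simp only [Pi.neg_apply, LinearMap.neg_comp, LinearMap.comp_neg, hφ h]

theorem isUnit_of_ker_eq_bot (φ : A.endRing) (hφ : ∀ p, LinearMap.ker (φ.1 p) = ⊥) :
    IsUnit φ := by
  let e p := LinearEquiv.ofInjectiveEndo (φ.1 p) (LinearMap.ker_eq_bot.mp (hφ p))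
  let ψ : A.endRing := ⟨fun p => (e p).symm.toLinearMap, IsNatural.symm (e := e) φ.2⟩
  have hφψ : φ * ψ = 1 :=
    Subtype.ext <| funext fun p => LinearMap.ext (e p).apply_symm_apply
  have hψφ : ψ * φ = 1 :=
    Subtype.ext <| funext fun p => LinearMap.ext (e p).symm_apply_apply
  exact ⟨⟨φ, ψ, hφψ, hψφ⟩, rfl⟩

theorem Indecomposable.isUnit_or_isUnit_one_sub (hA : A.Indecomposable) (φ : A.endRing) :
    IsUnit φ ∨ IsUnit (1 - φ) := by
  have hker : IsStable fun p => ⨆ n : ℕ, LinearMap.ker (φ.1 p ^ n) :=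
    .iSup fun n => isStable_ker (φ ^ n).2
  have hrange : IsStable fun p => ⨅ n : ℕ, LinearMap.range (φ.1 p ^ n) :=
    .iInf fun n => isStable_range (φ ^ n).2
  refine (hA.eq_bot_or_eq_bot hker hrange fun p =>
    LinearMap.isCompl_iSup_ker_pow_iInf_range_pow (φ.1 p)).imp (fun h => ?_) fun h => ?_
  · refine isUnit_of_ker_eq_bot φ fun p => le_bot_iff.mp ?_
    calc LinearMap.ker (φ.1 p) = LinearMap.ker (φ.1 p ^ 1) := by rw [pow_one]
      _ ≤ ⨆ n : ℕ, LinearMap.ker (φ.1 p ^ n) := le_iSup (fun n => LinearMap.ker (φ.1 p ^ n)) 1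
      _ = ⊥ := h p
  · refine isUnit_of_ker_eq_bot (1 - φ) fun p => le_bot_iff.mp ?_
    rw [← h p]
    refine le_iInf fun n x hx => ⟨x, ?_⟩
    have hfixed : Function.IsFixedPt (φ.1 p) x := (sub_eq_zero.mp hx).symm
    rw [Module.End.pow_apply, hfixed.iterate n]

theorem Indecomposable.isLocalRing_endRing (hA : A.Indecomposable) (h0 : ¬ A.IsZero) :
    IsLocalRing A.endRing := by
  have : Nontrivial A.endRing := by
    refine ⟨1, 0, fun h => h0 fun p x => ?_⟩
    exact LinearMap.congr_fun (congrFun (congrArg Subtype.val h) p) x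
  exact .of_isUnit_or_isUnit_one_sub_self hA.isUnit_or_isUnit_one_sub

theorem isUnit_of_apply_eq_self [IsLocalRing A.endRing] {φ : A.endRing} {p : P}
    {x : A.carrier p} (hx : x ≠ 0) (hφ : φ.1 p x = x) : IsUnit φ := by
  have hφ_or : IsUnit φ ∨ IsUnit (1 - φ) :=
    IsLocalRing.isUnit_or_isUnit_of_add_one (add_sub_cancel φ 1)
  refine hφ_or.resolve_right fun h => hx ?_
  obtain ⟨ψ, hψ⟩ := h.exists_left_inv
  calc x = (ψ * (1 - φ)).1 p x := by rw [hψ]; rfl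
    _ = ψ.1 p (x - φ.1 p x) := rfl
    _ = 0 := by rw [hφ, sub_self, map_zero]

theorem isRetract_of_isUnit_comp {s : ∀ p, A.carrier p →ₗ[K] N.carrier p}
    {t : ∀ p, N.carrier p →ₗ[K] A.carrier p} (hs : IsNatural s) (ht : IsNatural t)
    (h : IsUnit (⟨fun p => t p ∘ₗ s p, ht.comp hs⟩ : A.endRing)) : A.IsRetract N := by
  obtain ⟨ψ, hψ⟩ := h.exists_left_inv
  exact ⟨s, fun p => ψ.1 p ∘ₗ t p, hs, .comp ψ.2 ht,
    fun p => LinearMap.congr_fun (congrFun (congrArg Subtype.val hψ) p)⟩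

end EndomorphismRing

section DirectSum

variable {A M : PersMod K P} {ι : Type} {f : ι → PersMod K P}

/-- The projection of `M ≅ ⨁ i, f i` onto the summand `f i`. -/
def IsoToDirectSum.proj (D : IsoToDirectSum M f) (i : ι) (p : P) :
    M.carrier p →ₗ[K] (f i).carrier p :=
  DFinsupp.lapply i ∘ₗ (D.hom p).toLinearMap

/-- The inclusion of the summand `f i` into `M ≅ ⨁ i, f i`. -/
def IsoToDirectSum.incl [DecidableEq ι] (D : IsoToDirectSum M f) (i : ι) (p : P) :
    (f i).carrier p →ₗ[K] M.carrier p :=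
  (D.hom p).symm.toLinearMap ∘ₗ
    DFinsupp.lsingle (R := K) (M := fun i => (f i).carrier p) i

theorem IsoToDirectSum.isNatural_proj (D : IsoToDirectSum M f) (i : ι) :
    IsNatural (D.proj i) := fun _ _ h =>
  LinearMap.ext fun x => DFunLike.congr_fun (LinearMap.congr_fun (D.naturality h) x) i

theorem IsoToDirectSum.isNatural_incl [DecidableEq ι] (D : IsoToDirectSum M f) (i : ι) :
    IsNatural (D.incl i) := by
  intro p q h
  ext y
  refine (D.hom q).symm_apply_eq.mpr ?_
  calc DFinsupp.single i ((f i).map h y)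
      = familyMap f h (DFinsupp.single i y) := by simp [familyMap]
    _ = familyMap f h (D.hom p (D.incl i p y)) :=
        congrArg _ ((D.hom p).apply_symm_apply (DFinsupp.single i y)).symm
    _ = D.hom q (M.map h (D.incl i p y)) :=
        (LinearMap.congr_fun (D.naturality h) (D.incl i p y)).symm

theorem IsoToDirectSum.exists_sum_incl_proj_eq [DecidableEq ι] (D : IsoToDirectSum M f) {p : P}
    (x : M.carrier p) : ∃ F : Finset ι, ∑ i ∈ F, D.incl i p (D.proj i p x) = x := by
  classical
  refine ⟨(D.hom p x).support, (D.hom p).injective ?_⟩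
  rw [map_sum]
  calc ∑ i ∈ (D.hom p x).support, D.hom p (D.incl i p (D.proj i p x))
      = (D.hom p x).sum DFinsupp.single :=
        Finset.sum_congr rfl fun _ _ => (D.hom p).apply_symm_apply _
    _ = D.hom p x := DFinsupp.sum_single

theorem Indecomposable.exists_isRetract_of_directSum (hA : A.Indecomposable) (h0 : ¬ A.IsZero)
    (hAM : A.IsRetract M) (D : IsoToDirectSum M f) : ∃ i, A.IsRetract (f i) := by
  classical
  obtain ⟨s, t, hs, ht, hts⟩ := hAM
  have : IsLocalRing A.endRing := hA.isLocalRing_endRing h0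
  have hproj i := (D.isNatural_proj i).comp hs
  have hincl i := ht.comp (D.isNatural_incl i)
  let φ i : A.endRing := ⟨_, (hincl i).comp (hproj i)⟩
  obtain ⟨p, x, hx⟩ : ∃ p, ∃ x : A.carrier p, x ≠ 0 := by simpa [IsZero] using h0
  obtain ⟨F, hF⟩ := D.exists_sum_incl_proj_eq (s p x)
  have hsum : (∑ i ∈ F, φ i).1 p x = x := by
    calc (∑ i ∈ F, φ i).1 p x = ∑ i ∈ F, t p (D.incl i p (D.proj i p (s p x))) := by
          simp [φ]
      _ = x := by rw [← map_sum, hF, hts p x]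
  obtain ⟨i, -, hi⟩ := IsLocalRing.exists_of_isUnit_sum (isUnit_of_apply_eq_self hx hsum)
  exact ⟨i, isRetract_of_isUnit_comp (hproj i) (hincl i) hi⟩

theorem IntervalDecomposable.isThin_of_isRetract (hM : M.IntervalDecomposable)
    (hA : A.Indecomposable) (hAM : A.IsRetract M) : A.IsThin := by
  obtain ⟨ι, f, hf, ⟨D⟩⟩ := hM
  by_cases h0 : A.IsZero
  · exact h0.isThin
  · obtain ⟨i, hi⟩ := hA.exists_isRetract_of_directSum h0 hAM D
    exact hi.isThin (hf i)

theorem IntervalDecomposable.restrict (hM : M.IntervalDecomposable) (Q : Set P) :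
    (M.restrict Q).IntervalDecomposable := by
  obtain ⟨ι, f, hf, ⟨D⟩⟩ := hM
  exact ⟨ι, fun i => (f i).restrict Q, fun i q => hf i q,
    ⟨⟨fun q => D.hom q, fun h => D.naturality h⟩⟩⟩

end DirectSum

end PersMod

theorem not_interval_decomposable_of_restriction_general {K : Type} [Field K] {Q : Type}
    [Preorder Q] (M : PersMod K Q) (P : Set Q) (A B : PersMod K P)
    (h : (M.restrict P).Isomorphic (A.dsum B)) (hA : A.Indecomposable)
    (hnotthin : ¬ A.IsThin) : ¬ M.IntervalDecomposable := fun hM =>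
  hnotthin ((hM.restrict P).isThin_of_isRetract hA (PersMod.isRetract_of_isomorphic_dsum h))

/-- if the restriction of `M` (a persistence module over `ℝ₊²`) to some
subposet `P` has a direct summand `A` that is indecomposable and not thin, then `M` is
not interval decomposable. -/
theorem not_interval_decomposable_of_restriction (K : Type) [Field K]
    (M : PersMod K (ℝ≥0 × ℝ≥0)) (P : Set (ℝ≥0 × ℝ≥0))
    (A B : PersMod K P) (h : (M.restrict P).Isomorphic (A.dsum B))
    (hA : A.Indecomposable) (hnotthin : ¬ A.IsThin) :
    ¬ M.IntervalDecomposable :=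
  not_interval_decomposable_of_restriction_general M P A B h hA hnotthin
end

section
/- Let d ≥ 2 and let v₀, v₁, …, v_d ∈ ℝ^d be the vertices of a regular d-simplex Σ with unit edge length, let σ be the facet {v₁, …, v_d}, and let u be the unit vector at v₀ pointing perpendicularly toward the hyperplane spanned by σ. For δ ≥ 0 write Σ_δ for the simplex with vertices v₀ + δu, v₁, …, v_d, let R_δ be the minimum enclosing ball radius of the vertex set of Σ_δ, and let r_δ be the minimum enclosing ball radius of a facet of Σ_δ containing the vertex v₀ + δu (i.e., of {v₀ + δu} ∪ (σ \ {vⱼ}) for any j). Then there exists δ₀ > 0 such that for all 0 < δ' < δ < δ₀: r_δ < r_{δ'} < r and R_δ < R_{δ'} < R, where r = √((d−1)/(2d)) and R = √(d/(2(d+1))). -/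
open Metric Finset

/-- Minimum enclosing ball radius of a set `T` in `ℝ^d`: the infimum over centers `c`
of the maximal distance from `c` to a point of `T`. -/
noncomputable def mebRadius (d : ℕ) (T : Set (EuclideanSpace ℝ (Fin d))) : ℝ :=
  ⨅ c : EuclideanSpace ℝ (Fin d), ⨆ p ∈ T, dist c p

/-!
If a centre `c` lies in the convex hull of a set `T` and is equidistant from the points of `T`, then
no other centre does better: each `q` has some point of `T` at least as far from it as from `c`.
For an apex at height `H` over the circumcentre of a base of circumradius `r ≤ H`, such a centre
lies on the altitude and gives the radius `(H ^ 2 + r ^ 2) / (2 * H)`, which increases with `H` for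
`H > r`. Moving the apex of a regular simplex towards the opposite facet keeps it equidistant from
the vertices of that facet, hence above the centroid of each face of it, and lowers its height over
all these centroids at once.
-/

open scoped RealInnerProductSpace

section MinEnclosingRadius

/-- The minimum enclosing ball radius in an arbitrary metric space. It is only meaningful for
bounded `T`, the supremum of an unbounded set of reals being `0`. -/
noncomputable def minEnclosingRadius {X : Type*} [PseudoMetricSpace X] (T : Set X) : ℝ :=
  ⨅ c : X, ⨆ p ∈ T, dist c p

theorem mebRadius_eq_minEnclosingRadius (d : ℕ) (T : Set (EuclideanSpace ℝ (Fin d))) :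
    mebRadius d T = minEnclosingRadius T :=
  rfl

variable {X : Type*} [PseudoMetricSpace X] {T : Set X} {ρ : ℝ}

theorem minEnclosingRadius_le {c : X} (hρ : 0 ≤ ρ) (hT : ∀ x ∈ T, dist c x ≤ ρ) :
    minEnclosingRadius T ≤ ρ := by
  have hbdd : BddBelow (Set.range fun c : X => ⨆ p ∈ T, dist c p) :=
    ⟨0, Set.forall_mem_range.2 fun _ =>
      Real.iSup_nonneg fun _ => Real.iSup_nonneg fun _ => dist_nonneg⟩
  exact (ciInf_le hbdd c).trans (Real.iSup_le (fun x => Real.iSup_le (hT x) hρ) hρ)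

theorem dist_le_iSup_dist (hT : Bornology.IsBounded T) (c : X) {x : X} (hx : x ∈ T) :
    dist c x ≤ ⨆ p ∈ T, dist c p := by
  obtain ⟨M, hM⟩ := hT.subset_closedBall c
  have hbdd : BddAbove (Set.range fun p => ⨆ _ : p ∈ T, dist c p) := by
    refine ⟨max M 0, Set.forall_mem_range.2 fun p => Real.iSup_le (fun hp => ?_) (le_max_right _ _)⟩
    exact (mem_closedBall'.1 (hM hp)).trans (le_max_left _ _)
  exact (ciSup_pos hx).ge.trans (le_ciSup hbdd x)

theorem le_minEnclosingRadius [Nonempty X] (hT : Bornology.IsBounded T)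
    (h : ∀ c, ∃ x ∈ T, ρ ≤ dist c x) : ρ ≤ minEnclosingRadius T :=
  le_ciInf fun c =>
    let ⟨_, hx, hρ⟩ := h c
    hρ.trans (dist_le_iSup_dist hT c hx)

end MinEnclosingRadius

section InnerProductSpace

variable {E : Type*} [NormedAddCommGroup E] [InnerProductSpace ℝ E]

section ConvexHull

theorem convex_setOf_dist_lt_dist (q c : E) : Convex ℝ {x | dist q x < dist c x} := by
  have h : {x | dist q x < dist c x} = {x | (‖q‖ ^ 2 - ‖c‖ ^ 2) / 2 < ⟪q - c, x⟫} := by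
    ext x
    rw [Set.mem_ofPred_eq, Set.mem_ofPred_eq, ← sq_lt_sq₀ dist_nonneg dist_nonneg, dist_eq_norm,
      dist_eq_norm, norm_sub_sq_real, norm_sub_sq_real, inner_sub_left]
    constructor <;> intro <;> linarith
  rw [h]
  exact convex_halfSpace_gt (innerₛₗ ℝ (q - c)).isLinear _

theorem exists_mem_dist_le_dist_of_mem_convexHull {T : Set E} {c : E} (hc : c ∈ convexHull ℝ T)
    (q : E) : ∃ x ∈ T, dist c x ≤ dist q x := by
  by_contra! hT
  have hqc : dist q c < dist c c := convexHull_min hT (convex_setOf_dist_lt_dist q c) hc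
  exact (dist_self c ▸ hqc).not_ge dist_nonneg

theorem minEnclosingRadius_eq_of_mem_convexHull {T : Set E} {c : E} {ρ : ℝ}
    (hc : c ∈ convexHull ℝ T) (hT : ∀ x ∈ T, dist c x = ρ) : minEnclosingRadius T = ρ := by
  obtain ⟨y, hy⟩ := convexHull_nonempty_iff.1 ⟨c, hc⟩
  have hρ : 0 ≤ ρ := hT y hy ▸ dist_nonneg
  have hbdd : Bornology.IsBounded T :=
    isBounded_closedBall.subset fun x hx => mem_closedBall'.2 (hT x hx).le
  refine (minEnclosingRadius_le hρ fun x hx => (hT x hx).le).antisymm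
    (le_minEnclosingRadius hbdd fun q => ?_)
  obtain ⟨x, hx, hcq⟩ := exists_mem_dist_le_dist_of_mem_convexHull hc q
  exact ⟨x, hx, hT x hx ▸ hcq⟩

end ConvexHull

section Cone

theorem minEnclosingRadius_insert_of_inner_eq_zero {T : Set E} {g p : E} {r : ℝ}
    (hg : g ∈ convexHull ℝ T) (hr : ∀ x ∈ T, dist x g = r)
    (hp : ∀ x ∈ T, ⟪x - g, p - g⟫ = 0) (hpos : 0 < dist g p) (hrp : r ≤ dist g p) :
    minEnclosingRadius (insert p T) = (dist g p ^ 2 + r ^ 2) / (2 * dist g p) := by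
  obtain ⟨y, hy⟩ := convexHull_nonempty_iff.1 ⟨g, hg⟩
  have hr₀ : 0 ≤ r := hr y hy ▸ dist_nonneg
  set H := dist g p with hH
  -- The point at ratio `t` on the altitude is equidistant from `p` and from the points of `T`.
  set t := (H ^ 2 - r ^ 2) / (2 * H ^ 2) with ht
  have ht₀ : 0 ≤ t := div_nonneg (sub_nonneg.2 (pow_le_pow_left₀ hr₀ hrp 2)) (by positivity)
  have ht₁ : 1 - t = (H ^ 2 + r ^ 2) / (2 * H ^ 2) := by rw [ht]; field_simp; ring
  have ht₁' : 0 ≤ 1 - t := ht₁ ▸ by positivity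
  refine minEnclosingRadius_eq_of_mem_convexHull (c := AffineMap.lineMap g p t) ?_ ?_
  · exact (convex_convexHull ℝ _).segment_subset (convexHull_mono (Set.subset_insert p T) hg)
      (subset_convexHull ℝ _ (Set.mem_insert p T))
      (lineMap_mem_segment ℝ g p ⟨ht₀, sub_nonneg.1 ht₁'⟩)
  · rintro x (rfl | hx)
    · rw [dist_lineMap_right, Real.norm_of_nonneg ht₁', ht₁, ← hH]
      field_simp
    · rw [← sq_eq_sq₀ dist_nonneg (by positivity), dist_comm,
        dist_sq_lineMap_of_inner_eq_zero t (hp x hx), hr x hx, ht, ← hH]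
      field_simp
      ring

theorem strictMonoOn_sq_add_sq_div_two_mul {r : ℝ} (hr : 0 ≤ r) :
    StrictMonoOn (fun H : ℝ => (H ^ 2 + r ^ 2) / (2 * H)) (Set.Ioi r) := by
  intro H hH H' hH' hlt
  rw [Set.mem_Ioi] at hH hH'
  have hrr : r * r < H * H' := mul_lt_mul'' hH hH' hr hr
  have hdiff : 0 < (H' - H) * (H * H' - r * r) := mul_pos (sub_pos.2 hlt) (sub_pos.2 hrr)
  rw [div_lt_div_iff₀ (by linarith) (by linarith)]
  linarith

/-- The point obtained from `x` by moving it a distance `δ` towards `b`; it is `x` itself when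
`b = x`. -/
noncomputable def moveToward (x b : E) (δ : ℝ) : E :=
  x + δ • (‖b - x‖⁻¹ • (b - x))

@[simp]
theorem moveToward_zero (x b : E) : moveToward x b 0 = x := by
  simp [moveToward]

theorem moveToward_eq_lineMap (x b : E) (δ : ℝ) :
    moveToward x b δ = AffineMap.lineMap b x (1 - δ / dist b x) := by
  rw [AffineMap.lineMap_apply_module', moveToward, ← dist_eq_norm, smul_smul, ← div_eq_mul_inv]
  module

theorem dist_sq_moveToward_of_inner_eq_zero {x b z : E} (hxb : b ≠ x) (h : ⟪z - b, x - b⟫ = 0)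
    (δ : ℝ) : dist z (moveToward x b δ) ^ 2 = (dist b x - δ) ^ 2 + dist z b ^ 2 := by
  have hne : dist b x ≠ 0 := dist_ne_zero.2 hxb
  rw [moveToward_eq_lineMap, dist_sq_lineMap_of_inner_eq_zero _ h]
  field_simp
  ring

end Cone

section Centroid

variable {ι : Type*} {S : Finset ι} {v : ι → E}

theorem centroid_eq_inv_card_smul_sum (hS : S.Nonempty) (v : ι → E) :
    S.centroid ℝ v = (#S : ℝ)⁻¹ • ∑ i ∈ S, v i := by
  rw [S.centroid_eq_centerMass hS,
    S.centerMass_eq_of_sum_1 _ (S.sum_centroidWeights_eq_one_of_nonempty ℝ hS), smul_sum]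
  rfl

theorem centroid_mem_convexHull_image (hS : S.Nonempty) (v : ι → E) :
    S.centroid ℝ v ∈ convexHull ℝ (v '' S) := by
  have hsum := S.sum_centroidWeights_eq_one_of_nonempty ℝ hS
  rw [S.centroid_eq_centerMass hS]
  exact S.centerMass_mem_convexHull (fun i _ => by simp) (hsum ▸ one_pos)
    fun i hi => Set.mem_image_of_mem v hi

theorem sum_dist_sq_eq_card_mul_dist_centroid_sq_add (hS : S.Nonempty) (v : ι → E) (q : E) :
    ∑ i ∈ S, dist (v i) q ^ 2 =
      #S * dist (S.centroid ℝ v) q ^ 2 + ∑ i ∈ S, dist (v i) (S.centroid ℝ v) ^ 2 := by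
  set g := S.centroid ℝ v with hg
  have hzero : ∑ i ∈ S, (v i - g) = 0 := by
    have hk : (#S : ℝ) ≠ 0 := Nat.cast_ne_zero.2 hS.card_ne_zero
    rw [sum_sub_distrib, sum_const, ← Nat.cast_smul_eq_nsmul ℝ, hg,
      centroid_eq_inv_card_smul_sum hS, smul_inv_smul₀ hk, sub_self]
  have hexpand : ∀ i ∈ S, dist (v i) q ^ 2 =
      dist (v i) g ^ 2 + 2 * ⟪v i - g, g - q⟫ + dist g q ^ 2 := fun i _ => by
    rw [dist_eq_norm, dist_eq_norm, dist_eq_norm, ← norm_add_sq_real, sub_add_sub_cancel]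
  rw [sum_congr rfl hexpand, sum_add_distrib, sum_add_distrib, ← mul_sum, ← sum_inner, hzero,
    inner_zero_left, sum_const, nsmul_eq_mul]
  ring

theorem dist_sq_eq_dist_centroid_sq_add_of_dist_sq_eq {p : E} {L a : ℝ} (hS : S.Nonempty)
    (hp : ∀ i ∈ S, dist (v i) p ^ 2 = L) (ha : ∀ i ∈ S, dist (v i) (S.centroid ℝ v) ^ 2 = a) :
    L = dist (S.centroid ℝ v) p ^ 2 + a := by
  have hk : (#S : ℝ) ≠ 0 := Nat.cast_ne_zero.2 hS.card_ne_zero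
  have hsum := sum_dist_sq_eq_card_mul_dist_centroid_sq_add hS v p
  rw [sum_congr rfl hp, sum_congr rfl ha, sum_const, sum_const, nsmul_eq_mul, nsmul_eq_mul,
    ← mul_add] at hsum
  exact mul_left_cancel₀ hk hsum

theorem inner_sub_centroid_eq_zero_of_dist_sq_eq {p : E} {L a : ℝ}
    (hp : ∀ i ∈ S, dist (v i) p ^ 2 = L) (ha : ∀ i ∈ S, dist (v i) (S.centroid ℝ v) ^ 2 = a) :
    ∀ i ∈ S, ⟪v i - S.centroid ℝ v, p - S.centroid ℝ v⟫ = 0 := by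
  intro i hi
  have hpyth := dist_sq_eq_dist_centroid_sq_add_of_dist_sq_eq ⟨i, hi⟩ hp ha
  have hcos := norm_sub_sq_real (v i - S.centroid ℝ v) (p - S.centroid ℝ v)
  rw [sub_sub_sub_cancel_right, ← dist_eq_norm, ← dist_eq_norm, ← dist_eq_norm, hp i hi, ha i hi,
    dist_comm p] at hcos
  linarith

end Centroid

section RegularSimplex

/-- The circumradius of a regular simplex with `k` vertices and unit edge length. Indexing by the
number of vertices, rather than the dimension, suits faces given as finite sets; at `k = 0` the
division by zero makes it `0`. -/
noncomputable def regularCircumradius (k : ℕ) : ℝ :=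
  √(((k : ℝ) - 1) / (2 * k))

theorem regularCircumradius_nonneg (k : ℕ) : 0 ≤ regularCircumradius k :=
  Real.sqrt_nonneg _

theorem regularCircumradius_sq {k : ℕ} (hk : k ≠ 0) :
    regularCircumradius k ^ 2 = ((k : ℝ) - 1) / (2 * k) := by
  have hk' : (1 : ℝ) ≤ k := Nat.one_le_cast.2 (Nat.one_le_iff_ne_zero.2 hk)
  exact Real.sq_sqrt (div_nonneg (sub_nonneg.2 hk') (by positivity))

theorem regularCircumradius_sq_lt_half (k : ℕ) : regularCircumradius k ^ 2 < 1 / 2 := by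
  rcases eq_or_ne k 0 with rfl | hk
  · simp [regularCircumradius]
  · have : (0 : ℝ) < k := Nat.cast_pos.2 (Nat.pos_of_ne_zero hk)
    rw [regularCircumradius_sq hk, div_lt_div_iff₀ (by positivity) two_pos]
    linarith

theorem regularCircumradius_mono : Monotone regularCircumradius := by
  refine monotone_nat_of_le_succ fun k => ?_
  rcases eq_or_ne k 0 with rfl | hk
  · simp [regularCircumradius]
  · have : (0 : ℝ) < k := Nat.cast_pos.2 (Nat.pos_of_ne_zero hk)
    refine Real.sqrt_le_sqrt ?_
    rw [div_le_div_iff₀ (by positivity) (by positivity)]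
    push_cast
    nlinarith

theorem one_div_two_mul_sqrt_one_sub_regularCircumradius_sq {k : ℕ} (hk : k ≠ 0) :
    1 / (2 * √(1 - regularCircumradius k ^ 2)) = regularCircumradius (k + 1) := by
  have : (0 : ℝ) < k := Nat.cast_pos.2 (Nat.pos_of_ne_zero hk)
  have hlt := regularCircumradius_sq_lt_half k
  rw [← sq_eq_sq₀ (by positivity) (regularCircumradius_nonneg _), div_pow, mul_pow,
    Real.sq_sqrt (by linarith), regularCircumradius_sq hk, regularCircumradius_sq k.succ_ne_zero]
  have hsub : 1 - ((k : ℝ) - 1) / (2 * k) = (k + 1) / (2 * k) := by field_simp; ring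
  rw [hsub]
  push_cast
  field_simp
  ring

variable {ι : Type*} {σ S : Finset ι} {v : ι → E} {x : E}

theorem dist_centroid_of_pairwise_dist_eq_one
    (hS : (S : Set ι).Pairwise fun i j => dist (v i) (v j) = 1) :
    ∀ i ∈ S, dist (v i) (S.centroid ℝ v) = regularCircumradius #S := by
  classical
  intro i hi
  have hne : S.Nonempty := ⟨i, hi⟩
  set B := ∑ j ∈ S, dist (v j) (S.centroid ℝ v) ^ 2 with hB
  have hleib : ∀ j ∈ S, (#S : ℝ) - 1 = #S * dist (v j) (S.centroid ℝ v) ^ 2 + B := by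
    intro j hj
    have hedges : ∀ l ∈ S.erase j, dist (v l) (v j) ^ 2 = 1 := fun l hl => by
      rw [hS (mem_of_mem_erase hl) hj (ne_of_mem_erase hl), one_pow]
    rw [dist_comm, hB, ← sum_dist_sq_eq_card_mul_dist_centroid_sq_add hne, ← add_sum_erase S _ hj,
      sum_congr rfl hedges]
    simp [card_erase_of_mem hj, Nat.cast_sub hne.card_pos]
  have hsum : (#S : ℝ) * (#S - 1) = #S * B + #S * B := by
    calc (#S : ℝ) * (#S - 1) = ∑ _j ∈ S, ((#S : ℝ) - 1) := by rw [sum_const, nsmul_eq_mul]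
      _ = #S * B + #S * B := by
        rw [sum_congr rfl hleib, sum_add_distrib, ← mul_sum, sum_const, nsmul_eq_mul]
  have hk : (0 : ℝ) < #S := Nat.cast_pos.2 hne.card_pos
  have hBval : (#S : ℝ) - 1 = 2 * B := mul_left_cancel₀ hk.ne' (by linarith)
  rw [← sq_eq_sq₀ dist_nonneg (regularCircumradius_nonneg _),
    regularCircumradius_sq hne.card_ne_zero, eq_div_iff (by positivity)]
  linarith [hleib i hi]

theorem minEnclosingRadius_insert_of_pairwise_dist_eq_one {p : E} {H : ℝ} (hne : S.Nonempty)
    (hS : (S : Set ι).Pairwise fun i j => dist (v i) (v j) = 1) (hH : regularCircumradius #S < H)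
    (hp : ∀ i ∈ S, dist (v i) p ^ 2 = H ^ 2 + regularCircumradius #S ^ 2) :
    minEnclosingRadius (insert p (v '' S)) = (H ^ 2 + regularCircumradius #S ^ 2) / (2 * H) := by
  have hr := dist_centroid_of_pairwise_dist_eq_one hS
  have hr2 : ∀ i ∈ S, dist (v i) (S.centroid ℝ v) ^ 2 = regularCircumradius #S ^ 2 :=
    fun i hi => by rw [hr i hi]
  have hH₀ : 0 < H := (regularCircumradius_nonneg _).trans_lt hH
  have hheight : dist (S.centroid ℝ v) p = H :=
    (sq_eq_sq₀ dist_nonneg hH₀.le).1 <| (add_right_cancel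
      (dist_sq_eq_dist_centroid_sq_add_of_dist_sq_eq hne hp hr2)).symm
  rw [← hheight] at hH hH₀ ⊢
  exact minEnclosingRadius_insert_of_inner_eq_zero (centroid_mem_convexHull_image hne v)
    (Set.forall_mem_image.2 hr)
    (Set.forall_mem_image.2 <| inner_sub_centroid_eq_zero_of_dist_sq_eq hp hr2) hH₀ hH.le

theorem minEnclosingRadius_insert_of_dist_eq_one (hne : S.Nonempty)
    (hS : (S : Set ι).Pairwise fun i j => dist (v i) (v j) = 1)
    (hx : ∀ i ∈ S, dist (v i) x = 1) :
    minEnclosingRadius (insert x (v '' S)) = regularCircumradius (#S + 1) := by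
  have hlt := regularCircumradius_sq_lt_half #S
  set H := √(1 - regularCircumradius #S ^ 2)
  have hlt_H : regularCircumradius #S < H := Real.lt_sqrt_of_sq_lt (by linarith)
  have hsq : H ^ 2 + regularCircumradius #S ^ 2 = 1 := by
    rw [Real.sq_sqrt (by linarith), sub_add_cancel]
  rw [minEnclosingRadius_insert_of_pairwise_dist_eq_one hne hS hlt_H
    fun i hi => by rw [hx i hi, one_pow, hsq], hsq]
  exact one_div_two_mul_sqrt_one_sub_regularCircumradius_sq hne.card_ne_zero

theorem dist_centroid_apex_sq (hne : σ.Nonempty)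
    (hσ : (σ : Set ι).Pairwise fun i j => dist (v i) (v j) = 1)
    (hx : ∀ i ∈ σ, dist (v i) x = 1) :
    dist (σ.centroid ℝ v) x ^ 2 = 1 - regularCircumradius #σ ^ 2 := by
  rw [eq_sub_iff_add_eq]
  exact (dist_sq_eq_dist_centroid_sq_add_of_dist_sq_eq hne
    (fun i hi => by rw [hx i hi, one_pow])
    fun i hi => by rw [dist_centroid_of_pairwise_dist_eq_one hσ i hi]).symm

theorem regularCircumradius_lt_dist_centroid_apex (hne : σ.Nonempty)
    (hσ : (σ : Set ι).Pairwise fun i j => dist (v i) (v j) = 1)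
    (hx : ∀ i ∈ σ, dist (v i) x = 1) :
    regularCircumradius #σ < dist (σ.centroid ℝ v) x := by
  refine lt_of_pow_lt_pow_left₀ 2 dist_nonneg ?_
  linarith [dist_centroid_apex_sq hne hσ hx, regularCircumradius_sq_lt_half #σ]

theorem dist_sq_moveToward_centroid
    (hσ : (σ : Set ι).Pairwise fun i j => dist (v i) (v j) = 1)
    (hx : ∀ i ∈ σ, dist (v i) x = 1) (δ : ℝ) :
    ∀ i ∈ σ, dist (v i) (moveToward x (σ.centroid ℝ v) δ) ^ 2 =
      (dist (σ.centroid ℝ v) x - δ) ^ 2 + regularCircumradius #σ ^ 2 := by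
  intro i hi
  have hpos := (regularCircumradius_nonneg _).trans_lt
    (regularCircumradius_lt_dist_centroid_apex ⟨i, hi⟩ hσ hx)
  have hr := dist_centroid_of_pairwise_dist_eq_one hσ
  have horth := inner_sub_centroid_eq_zero_of_dist_sq_eq
    (fun j hj => by rw [hx j hj]) (fun j hj => by rw [hr j hj]) i hi
  rw [dist_sq_moveToward_of_inner_eq_zero (dist_pos.1 hpos) horth, hr i hi]

theorem strictAntiOn_minEnclosingRadius_insert_moveToward (hne : S.Nonempty) (hSσ : S ⊆ σ)
    (hσ : (σ : Set ι).Pairwise fun i j => dist (v i) (v j) = 1)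
    (hx : ∀ i ∈ σ, dist (v i) x = 1) :
    StrictAntiOn (fun δ => minEnclosingRadius
        (insert (moveToward x (σ.centroid ℝ v) δ) (v '' S)))
      (Set.Iio (dist (σ.centroid ℝ v) x - regularCircumradius #σ)) := by
  set h := dist (σ.centroid ℝ v) x
  set R := regularCircumradius #σ
  set r := regularCircumradius #S
  have hr : 0 ≤ r := regularCircumradius_nonneg _
  have hrR : r ^ 2 ≤ R ^ 2 := pow_le_pow_left₀ hr (regularCircumradius_mono (card_le_card hSσ)) 2
  -- The height of the moved apex over the centroid of `S`.
  let H : ℝ → ℝ := fun δ => √((h - δ) ^ 2 + R ^ 2 - r ^ 2)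
  have hsq : ∀ δ ∈ Set.Iio (h - R), R ^ 2 < (h - δ) ^ 2 := fun δ hδ =>
    pow_lt_pow_left₀ (lt_sub_comm.1 hδ) (regularCircumradius_nonneg _) two_ne_zero
  have hH : Set.MapsTo H (Set.Iio (h - R)) (Set.Ioi r) := fun δ hδ =>
    Real.lt_sqrt_of_sq_lt (by linarith [hsq δ hδ])
  have hanti : StrictAntiOn H (Set.Iio (h - R)) := by
    intro δ' _ δ hδ hlt
    have hheight : (h - δ) ^ 2 < (h - δ') ^ 2 :=
      pow_lt_pow_left₀ (sub_lt_sub_left hlt h)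
        ((regularCircumradius_nonneg _).trans (lt_sub_comm.1 hδ).le) two_ne_zero
    exact Real.sqrt_lt_sqrt (by linarith [hsq δ hδ, sq_nonneg R]) (by linarith)
  refine ((strictMonoOn_sq_add_sq_div_two_mul hr).comp_strictAntiOn hanti hH).congr fun δ hδ => ?_
  refine (minEnclosingRadius_insert_of_pairwise_dist_eq_one hne (hσ.mono (coe_subset.2 hSσ))
    (hH hδ) fun i hi => ?_).symm
  rw [dist_sq_moveToward_centroid hσ hx δ i (hSσ hi),
    Real.sq_sqrt (by linarith [hsq δ hδ, sq_nonneg R]), sub_add_cancel]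

theorem perturbed_simplex_radii_general (hne : σ.Nonempty)
    (hσ : (σ : Set ι).Pairwise fun i j => dist (v i) (v j) = 1)
    (hx : ∀ i ∈ σ, dist (v i) x = 1) :
    ∃ δ₀ : ℝ, 0 < δ₀ ∧ ∀ δ' δ : ℝ, 0 < δ' → δ' < δ → δ < δ₀ → ∀ S ⊆ σ, S.Nonempty →
      minEnclosingRadius (insert (moveToward x (σ.centroid ℝ v) δ) (v '' S)) <
        minEnclosingRadius (insert (moveToward x (σ.centroid ℝ v) δ') (v '' S)) ∧
      minEnclosingRadius (insert (moveToward x (σ.centroid ℝ v) δ') (v '' S)) <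
        regularCircumradius (#S + 1) := by
  refine ⟨_, sub_pos.2 (regularCircumradius_lt_dist_centroid_apex hne hσ hx), ?_⟩
  intro δ' δ hδ' hlt hδ S hSσ hS
  have hanti := strictAntiOn_minEnclosingRadius_insert_moveToward hS hSσ hσ hx
  have hzero := hanti ((hδ'.trans hlt).trans hδ) (hlt.trans hδ) hδ'
  have hregular := minEnclosingRadius_insert_of_dist_eq_one hS (hσ.mono (coe_subset.2 hSσ))
    fun i hi => hx i (hSσ hi)
  exact ⟨hanti (hlt.trans hδ) hδ hlt, by simpa only [moveToward_zero, hregular] using hzero⟩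

end RegularSimplex

end InnerProductSpace

/-- push the apex `v₀` of a regular unit-edge `d`-simplex a distance `δ`
towards the hyperplane of the opposite facet `σ`, along the inward unit normal `u`
(which points from `v₀` to the centroid of `σ`). Writing `R_δ` for the minimum
enclosing ball radius of the perturbed vertex set and `r_δ` for that of any facet
containing the moved vertex, there is a `δ₀ > 0` such that for all `0 < δ' < δ < δ₀`:
`r_δ < r_{δ'} < r = √((d−1)/(2d))` and `R_δ < R_{δ'} < R = √(d/(2(d+1)))`. -/
theorem perturbed_simplex_radii (d : ℕ) (hd : 2 ≤ d)
    (v : Fin (d + 1) → EuclideanSpace ℝ (Fin d))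
    (hv : ∀ i j, i ≠ j → dist (v i) (v j) = 1)
    -- the centroid of the facet σ = {v₁, …, v_d}
    (b : EuclideanSpace ℝ (Fin d))
    (hb : b = ((d : ℝ))⁻¹ • ∑ i ∈ Finset.univ.erase (0 : Fin (d + 1)), v i)
    -- the unit vector at v₀ pointing perpendicularly towards the hyperplane of σ
    (u : EuclideanSpace ℝ (Fin d)) (hu : u = ‖b - v 0‖⁻¹ • (b - v 0)) :
    ∃ δ₀ : ℝ, 0 < δ₀ ∧ ∀ δ' δ : ℝ, 0 < δ' → δ' < δ → δ < δ₀ →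
      (∀ j : Fin (d + 1), j ≠ 0 →
        mebRadius d ({v 0 + δ • u} ∪ v '' {i | i ≠ 0 ∧ i ≠ j}) <
          mebRadius d ({v 0 + δ' • u} ∪ v '' {i | i ≠ 0 ∧ i ≠ j}) ∧
        mebRadius d ({v 0 + δ' • u} ∪ v '' {i | i ≠ 0 ∧ i ≠ j}) <
          Real.sqrt (((d : ℝ) - 1) / (2 * (d : ℝ)))) ∧
      (mebRadius d ({v 0 + δ • u} ∪ v '' {i | i ≠ 0}) <
          mebRadius d ({v 0 + δ' • u} ∪ v '' {i | i ≠ 0}) ∧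
        mebRadius d ({v 0 + δ' • u} ∪ v '' {i | i ≠ 0}) <
          Real.sqrt ((d : ℝ) / (2 * ((d : ℝ) + 1)))) := by
  have hcard : #(univ.erase (0 : Fin (d + 1))) = d := by simp
  have hne : (univ.erase (0 : Fin (d + 1))).Nonempty := card_pos.1 (by omega)
  have hp : ∀ δ, v 0 + δ • u = moveToward (v 0) ((univ.erase 0).centroid ℝ v) δ := fun δ => by
    rw [centroid_eq_inv_card_smul_sum hne, hcard, ← hb, hu, moveToward]
  obtain ⟨δ₀, hδ₀, hradii⟩ := perturbed_simplex_radii_general hne (fun i _ j _ => hv i j)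
    fun i hi => hv i 0 (ne_of_mem_erase hi)
  simp only [mebRadius_eq_minEnclosingRadius, Set.singleton_union, hp]
  refine ⟨δ₀, hδ₀, fun δ' δ hδ' hlt hδ => ⟨fun j hj => ?_, ?_⟩⟩
  · have hset : {i | i ≠ 0 ∧ i ≠ j} = ((univ.erase 0).erase j : Finset (Fin (d + 1))) := by
      ext i; simp [and_comm]
    have hcard' : #((univ.erase 0).erase j) = d - 1 := by
      rw [card_erase_of_mem (mem_erase.2 ⟨hj, mem_univ j⟩), hcard]
    have hface := hradii δ' δ hδ' hlt hδ _ (erase_subset j _) (card_pos.1 (by omega))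
    rwa [hcard', Nat.sub_add_cancel (by omega), ← hset] at hface
  · have hset : {i : Fin (d + 1) | i ≠ 0} = (univ.erase 0 : Finset (Fin (d + 1))) := by ext i; simp
    simpa [regularCircumradius, hset] using hradii δ' δ hδ' hlt hδ _ Subset.rfl hne
end

section
/- Let S ⊆ ℝ^d be a finite point set and let f : ℝ^d → ℝ be a linear function that is injective on S (so f induces a total order on S). Let g : ℝ^d → ℝ be a C² function and let a ∈ ℝ^d be a regular point of g, i.e., ∇g(a) ≠ 0. Then there exists t₀ > 0 such that for every t with 0 < t ≤ t₀ there exists a linear isometry ρ of ℝ^d such that the similarity transformation T(x) = a + t·ρ(x − p₀), where p₀ is the point of S minimizing f, satisfies: for all x, y ∈ S, f(x) ≤ f(y) if and only if g(T(x)) ≤ g(T(y)). -/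
/-!
If `f = 0`, then `S` has at most one point. Otherwise the derivative `L` of `g` at `a` and the
functional `f` are represented by nonzero vectors of a Hilbert space. An isometry `ρ` that aligns
the two vectors satisfies `L ∘ ρ = c • f` for some `c > 0`, so the directional derivatives of `g`
at `a` along the vectors `ρ (x - p)`, `x ∈ S`, are ordered as the values `f x`. For small `t > 0`
the values `g (a + t • ρ (x - p))` are therefore ordered in the same way, and since `S` is finite
one bound on `t` serves all pairs.
-/

open Filter Topology

lemma eventually_lt_nhdsGT_of_hasDerivWithinAt_lt {φ ψ : ℝ → ℝ} {φ' ψ' x : ℝ}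
    (hφ : HasDerivWithinAt φ φ' (Set.Ioi x) x) (hψ : HasDerivWithinAt ψ ψ' (Set.Ioi x) x)
    (hx : φ x = ψ x) (hlt : φ' < ψ') : ∀ᶠ t in 𝓝[>] x, φ t < ψ t := by
  have hslope : Tendsto (slope (ψ - φ) x) (𝓝[>] x) (𝓝 (ψ' - φ')) :=
    (hasDerivWithinAt_iff_tendsto_slope' Set.self_notMem_Ioi).1 (hψ.sub hφ)
  filter_upwards [hslope.eventually_const_lt (sub_pos.2 hlt), self_mem_nhdsWithin] with t hpos ht
  simpa [hx] using (slope_pos_iff_of_le (le_of_lt ht)).1 hpos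

lemma eventually_lt_of_hasLineDerivAt_lt {E : Type*} [AddCommGroup E] [Module ℝ E]
    {g : E → ℝ} {a u v : E} {b c : ℝ} (hu : HasLineDerivAt ℝ g b a u)
    (hv : HasLineDerivAt ℝ g c a v) (hlt : b < c) :
    ∀ᶠ t in 𝓝[>] (0 : ℝ), g (a + t • u) < g (a + t • v) :=
  eventually_lt_nhdsGT_of_hasDerivWithinAt_lt (HasDerivAt.hasDerivWithinAt hu)
    (HasDerivAt.hasDerivWithinAt hv) (by simp) hlt

lemma le_iff_le_of_injOn_of_lt_imp_lt {α β γ : Type*} [LinearOrder β] [Preorder γ] {S : Set α}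
    {φ : α → β} {ψ : α → γ} (hφ : S.InjOn φ)
    (hlt : ∀ x ∈ S, ∀ y ∈ S, φ x < φ y → ψ x < ψ y) {x y : α} (hx : x ∈ S) (hy : y ∈ S) :
    φ x ≤ φ y ↔ ψ x ≤ ψ y := by
  refine ⟨fun hle => ?_, fun hle => not_lt.1 fun hyx => (hlt y hy x hx hyx).not_ge hle⟩
  rcases hle.lt_or_eq with hxy | heq
  · exact (hlt x hx y hy hxy).le
  · exact (congrArg ψ (hφ hx hy heq)).le

section HilbertSpace

variable {E : Type*} [NormedAddCommGroup E] [InnerProductSpace ℝ E] [CompleteSpace E]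

lemma exists_linearIsometryEquiv_apply_eq_of_norm_eq {f L : StrongDual ℝ E} (h : ‖f‖ = ‖L‖) :
    ∃ ρ : E ≃ₗᵢ[ℝ] E, ∀ x, L (ρ x) = f x := by
  let v := (InnerProductSpace.toDual ℝ E).symm f
  let w := (InnerProductSpace.toDual ℝ E).symm L
  let ρ := (ℝ ∙ (v - w))ᗮ.reflection
  have hρ : ρ v = w := Submodule.reflection_sub (by simpa [v, w] using h)
  refine ⟨ρ, fun x => ?_⟩
  calc L (ρ x) = inner ℝ w (ρ x) := by simp [w]
    _ = inner ℝ (ρ v) (ρ x) := by rw [hρ]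
    _ = inner ℝ v x := ρ.inner_map_map v x
    _ = f x := by simp [v]

lemma exists_linearIsometryEquiv_apply_eq_pos_mul {f L : StrongDual ℝ E} (hf : f ≠ 0)
    (hL : L ≠ 0) : ∃ ρ : E ≃ₗᵢ[ℝ] E, ∃ c : ℝ, 0 < c ∧ ∀ x, L (ρ x) = c * f x := by
  have hc : 0 < ‖L‖ / ‖f‖ := div_pos (norm_pos_iff.2 hL) (norm_pos_iff.2 hf)
  have hnorm : ‖(‖L‖ / ‖f‖) • f‖ = ‖L‖ := by
    rw [norm_smul, Real.norm_of_nonneg hc.le, div_mul_cancel₀ _ (norm_ne_zero_iff.2 hf)]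
  obtain ⟨ρ, hρ⟩ := exists_linearIsometryEquiv_apply_eq_of_norm_eq hnorm
  exact ⟨ρ, ‖L‖ / ‖f‖, hc, hρ⟩

lemma exists_linearIsometryEquiv_apply_lt_apply (f : StrongDual ℝ E) {L : StrongDual ℝ E}
    (hL : L ≠ 0) : ∃ ρ : E ≃ₗᵢ[ℝ] E, ∀ x y, f x < f y → L (ρ x) < L (ρ y) := by
  rcases eq_or_ne f 0 with rfl | hf
  · exact ⟨.refl ℝ E, by simp⟩
  obtain ⟨ρ, c, hc, hρ⟩ := exists_linearIsometryEquiv_apply_eq_pos_mul hf hL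
  exact ⟨ρ, fun x y hxy => by simpa only [hρ] using mul_lt_mul_of_pos_left hxy hc⟩

theorem linearization_of_order_general {S : Set E} (hS : S.Finite) (f : StrongDual ℝ E)
    (hinj : S.InjOn f) {g : E → ℝ} {a : E} {L : StrongDual ℝ E} (hL : L ≠ 0)
    (hg : ∀ v, HasLineDerivAt ℝ g (L v) a v) (p : E) :
    ∃ ρ : E ≃ₗᵢ[ℝ] E, ∃ t₀ : ℝ, 0 < t₀ ∧ ∀ t : ℝ, 0 < t → t ≤ t₀ → ∀ x ∈ S, ∀ y ∈ S,
      (f x ≤ f y ↔ g (a + t • ρ (x - p)) ≤ g (a + t • ρ (y - p))) := by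
  obtain ⟨ρ, hρ⟩ := exists_linearIsometryEquiv_apply_lt_apply f hL
  have hlt : ∀ x y, f x < f y →
      ∀ᶠ t in 𝓝[>] (0 : ℝ), g (a + t • ρ (x - p)) < g (a + t • ρ (y - p)) := fun x y hxy =>
    eventually_lt_of_hasLineDerivAt_lt (hg _) (hg _) (hρ _ _ (by simpa using hxy))
  have hev : ∀ᶠ t in 𝓝[>] (0 : ℝ), ∀ x ∈ S, ∀ y ∈ S, f x < f y →
      g (a + t • ρ (x - p)) < g (a + t • ρ (y - p)) :=
    hS.eventually_all.2 fun x _ => hS.eventually_all.2 fun y _ =>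
      eventually_imp_distrib_left.2 (hlt x y)
  obtain ⟨t₀, ht₀, hsub⟩ := mem_nhdsGT_iff_exists_Ioc_subset.1 hev
  exact ⟨ρ, t₀, ht₀, fun t ht ht' x hx y hy =>
    le_iff_le_of_injOn_of_lt_imp_lt (ψ := fun z => g (a + t • ρ (z - p))) hinj
      (hsub ⟨ht, ht'⟩) hx hy⟩

end HilbertSpace

/-- Let `S ⊆ ℝ^d` be finite, `f` a linear function injective on `S`
(with `p₀` the point of `S` minimizing `f`), `g` a `C²` function and `a` a regular
point of `g`. Then for all sufficiently small scalings `t` there is a linear isometry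
`ρ` such that the similarity transformation `T(x) = a + t·ρ(x − p₀)` makes `g ∘ T`
induce the same order on `S` as `f`. -/
theorem linearization_of_order (d : ℕ) (S : Set (EuclideanSpace ℝ (Fin d)))
    (hS : S.Finite) (hne : S.Nonempty)
    (f : EuclideanSpace ℝ (Fin d) →ₗ[ℝ] ℝ) (hinj : Set.InjOn f S)
    (g : EuclideanSpace ℝ (Fin d) → ℝ) (hg : ContDiff ℝ 2 g)
    (a : EuclideanSpace ℝ (Fin d)) (ha : fderiv ℝ g a ≠ 0)
    (p₀ : EuclideanSpace ℝ (Fin d)) (hp₀ : p₀ ∈ S) (hmin : ∀ x ∈ S, f p₀ ≤ f x) :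
    ∃ t₀ : ℝ, 0 < t₀ ∧ ∀ t : ℝ, 0 < t → t ≤ t₀ →
      ∃ ρ : EuclideanSpace ℝ (Fin d) ≃ₗᵢ[ℝ] EuclideanSpace ℝ (Fin d),
        ∀ x ∈ S, ∀ y ∈ S,
          (f x ≤ f y ↔ g (a + t • ρ (x - p₀)) ≤ g (a + t • ρ (y - p₀))) := by
  obtain ⟨ρ, t₀, ht₀, h⟩ := linearization_of_order_general hS f.toContinuousLinearMap hinj ha
    (hg.differentiable two_ne_zero a).hasFDerivAt.hasLineDerivAt p₀
  exact ⟨t₀, ht₀, fun t ht ht' => ⟨ρ, h t ht ht'⟩⟩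
end
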